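/- For every even integer m ≥ 2, the frame G_m has the following properties: (a) every world has at most two R-successors; (b) every world having two distinct R-successors has a dead-end R-successor; (c) for all integers n ≥ 1 and k ≥ 1 and all worlds v, w of G_m, if v R^k w and w satisfies condition B_n, then v R^n v; (d) for every integer n ≥ 1, every world w of G_m satisfying condition B_n, and every world v with w R^n v, one has v = w. -/

import Mathlib

/-- `pathRel R k w v` : there is an `R`-path of length exactly `k` from `w` to `v`. -/
def pathRel {W : Type*} (R : W → W → Prop) : ℕ → W → W → Prop
  | 0 => fun w v => w = v
  | k + 1 => fun w v => ∃ u, R w u ∧ pathRel R k u v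

/-- A world is a dead end if it sees no world. -/
def DeadEnd {W : Type*} (R : W → W → Prop) (v : W) : Prop := ∀ u, ¬ R v u

/-- Condition `B_n` at a world `w`: `w` has a dead-end successor; `w` sees in exactly `n`
steps a world having a dead-end successor; and for no `k` with `2 ≤ k ≤ n - 1` does `w` see
in exactly `k` steps a world having a dead-end successor. -/
def CondB {W : Type*} (R : W → W → Prop) (n : ℕ) (w : W) : Prop :=
  (∃ v, R w v ∧ DeadEnd R v) ∧
  (∃ v, pathRel R n w v ∧ ∃ u, R v u ∧ DeadEnd R u) ∧
  (∀ k, 2 ≤ k → k ≤ n - 1 → ¬ ∃ v, pathRel R k w v ∧ ∃ u, R v u ∧ DeadEnd R u)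

/-- The accessibility relation of the frame `G_m`:
worlds are `w_1, …, w_m` (encoded as `Sum.inl i` for `i : Fin m`, `w_{i+1} = Sum.inl i`)
together with `w*` (encoded as `Sum.inr ()`); `w_i R w_{i+1}` for `1 ≤ i < m`,
`w_m R w_1`, and `w_1 R w*`. -/
def Grel (m : ℕ) : (Fin m ⊕ Unit) → (Fin m ⊕ Unit) → Prop
  | Sum.inl i, Sum.inl j => (j : ℕ) = (i : ℕ) + 1 ∨ ((i : ℕ) = m - 1 ∧ (j : ℕ) = 0)
  | Sum.inl i, Sum.inr _ => (i : ℕ) = 0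
  | Sum.inr _, _ => False

/-!
Inside the cycle, `w_i` sees `w_j` in `k` steps iff `i + k ≡ j [MOD m]`, and `w*` is the only dead
end, so `w_1` is the only world seeing one. A path of length `n` from `w_1` to a world that sees a
dead end is therefore closed, whence `m ∣ n`. Conversely, if `m ∣ n`, every path of length `n` that
stays inside the cycle is closed, while a path of length `n` from `w_1` that leaves the cycle does
so at its last step, from `w_1` to `w*`. In the latter case both `n - 1` and `n` are multiples of
`m`, which is impossible for `m ≥ 2`.
-/

/-- A world sees a dead end if one of its successors is a dead end, i.e. if it satisfies `◇□⊥`. -/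
def SeesDeadEnd {W : Type*} (R : W → W → Prop) (w : W) : Prop := ∃ v, R w v ∧ DeadEnd R v

section PathRel

variable {W : Type*} {R : W → W → Prop} {k : ℕ} {v w : W}

theorem pathRel_succ_right : pathRel R (k + 1) w v ↔ ∃ u, pathRel R k w u ∧ R u v := by
  induction k generalizing w with
  | zero => simp [pathRel]
  | succ k ih =>
    calc pathRel R (k + 2) w v
      _ ↔ ∃ x, R w x ∧ ∃ u, pathRel R k x u ∧ R u v := exists_congr fun _ ↦ and_congr_right' ih
      _ ↔ ∃ u, (∃ x, R w x ∧ pathRel R k x u) ∧ R u v := by grind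

theorem DeadEnd.eq_of_pathRel (hw : DeadEnd R w) (h : pathRel R k w v) : w = v := by
  cases k with
  | zero => exact h
  | succ k =>
    obtain ⟨u, hwu, -⟩ := h
    exact absurd hwu (hw u)

end PathRel

namespace Grel

variable {m k n : ℕ} {u v w : Fin m ⊕ Unit}

theorem inl_inl_iff {i j : Fin m} : Grel m (.inl i) (.inl j) ↔ i + 1 ≡ j [MOD m] := by
  have hi := i.isLt
  rw [Nat.ModEq, Nat.mod_eq_of_lt j.isLt]
  rcases (Nat.succ_le_of_lt hi).eq_or_lt with h | h
  · simp only [Grel, ← Nat.succ_eq_add_one, h, Nat.mod_self]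
    omega
  · rw [Nat.mod_eq_of_lt h]
    simp only [Grel]
    omega

theorem deadEnd_inr : DeadEnd (Grel m) (.inr ()) := fun _ h ↦ h

theorem not_deadEnd_inl (i : Fin m) : ¬ DeadEnd (Grel m) (.inl i) := by
  intro h
  have hm : 0 < m := i.pos
  exact h (.inl ⟨(i + 1) % m, Nat.mod_lt _ hm⟩) (inl_inl_iff.2 (Nat.mod_modEq _ _).symm)

theorem seesDeadEnd_iff : SeesDeadEnd (Grel m) w ↔ Grel m w (.inr ()) := by
  constructor
  · rintro ⟨i | _, hwv, hv⟩
    · exact absurd hv (not_deadEnd_inl i)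
    · exact hwv
  · exact fun h ↦ ⟨.inr (), h, deadEnd_inr⟩

theorem not_seesDeadEnd_inr : ¬ SeesDeadEnd (Grel m) (.inr ()) := fun ⟨_, h, _⟩ ↦ h

theorem eq_of_seesDeadEnd (hw : SeesDeadEnd (Grel m) w) (hv : SeesDeadEnd (Grel m) v) :
    w = v := by
  rcases w with i | _
  · rcases v with j | _
    · have hi : (i : ℕ) = 0 := seesDeadEnd_iff.1 hw
      have hj : (j : ℕ) = 0 := seesDeadEnd_iff.1 hv
      exact congrArg Sum.inl (Fin.ext (hi.trans hj.symm))
    · exact absurd hv not_seesDeadEnd_inr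
  · exact absurd hw not_seesDeadEnd_inr

theorem inl_unique {i j : Fin m} (hi : Grel m w (.inl i)) (hj : Grel m w (.inl j)) : i = j := by
  rcases w with l | _
  · rw [inl_inl_iff] at hi hj
    exact Fin.ext ((hi.symm.trans hj).eq_of_lt_of_lt i.isLt j.isLt)
  · exact hi.elim

theorem eq_or_eq_or_eq {v₁ v₂ v₃ : Fin m ⊕ Unit} (h₁ : Grel m w v₁) (h₂ : Grel m w v₂)
    (h₃ : Grel m w v₃) : v₁ = v₂ ∨ v₁ = v₃ ∨ v₂ = v₃ := by
  rcases v₁ with i₁ | _ <;> rcases v₂ with i₂ | _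
  · exact .inl (congrArg Sum.inl (inl_unique h₁ h₂))
  · rcases v₃ with i₃ | _
    · exact .inr (.inl (congrArg Sum.inl (inl_unique h₁ h₃)))
    · exact .inr (.inr rfl)
  · rcases v₃ with i₃ | _
    · exact .inr (.inr (congrArg Sum.inl (inl_unique h₂ h₃)))
    · exact .inr (.inl rfl)
  · exact .inl rfl

theorem seesDeadEnd_of_ne (hu : Grel m w u) (hv : Grel m w v) (huv : u ≠ v) :
    SeesDeadEnd (Grel m) w := by
  rw [seesDeadEnd_iff]
  rcases u with i | _
  · rcases v with j | _
    · exact absurd (congrArg Sum.inl (inl_unique hu hv)) huv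
    · exact hv
  · exact hu

theorem pathRel_inl_inl_iff {i j : Fin m} :
    pathRel (Grel m) k (.inl i) (.inl j) ↔ i + k ≡ j [MOD m] := by
  induction k generalizing j with
  | zero =>
    simp only [pathRel, add_zero, Sum.inl.injEq]
    exact ⟨fun h ↦ h ▸ Nat.ModEq.refl _, fun h ↦ Fin.ext (h.eq_of_lt_of_lt i.isLt j.isLt)⟩
  | succ k ih =>
    rw [pathRel_succ_right, ← add_assoc]
    constructor
    · rintro ⟨l | _, hil, hlj⟩
      · exact ((ih.1 hil).add_right 1).trans (inl_inl_iff.1 hlj)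
      · exact hlj.elim
    · intro h
      have hl : i + k ≡ (i + k) % m [MOD m] := (Nat.mod_modEq _ _).symm
      exact ⟨.inl ⟨(i + k) % m, Nat.mod_lt _ i.pos⟩, ih.2 hl,
        inl_inl_iff.2 ((hl.symm.add_right 1).trans h)⟩

theorem pathRel_inl_self_iff {i : Fin m} :
    pathRel (Grel m) n (.inl i) (.inl i) ↔ m ∣ n := by
  rw [pathRel_inl_inl_iff, Nat.add_modEq_left_iff]

theorem dvd_of_seesDeadEnd (hw : SeesDeadEnd (Grel m) w) (hwu : pathRel (Grel m) n w u)
    (hu : SeesDeadEnd (Grel m) u) : m ∣ n := by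
  obtain rfl := eq_of_seesDeadEnd hw hu
  rcases w with i | _
  · exact pathRel_inl_self_iff.1 hwu
  · exact absurd hw not_seesDeadEnd_inr

theorem pathRel_self_of_dvd (hw : SeesDeadEnd (Grel m) w) (hvw : pathRel (Grel m) k v w)
    (hmn : m ∣ n) : pathRel (Grel m) n v v := by
  rcases v with i | _
  · exact pathRel_inl_self_iff.2 hmn
  · obtain rfl := deadEnd_inr.eq_of_pathRel hvw
    exact absurd hw not_seesDeadEnd_inr

theorem not_pathRel_inr_of_dvd (hm : 2 ≤ m) (hw : SeesDeadEnd (Grel m) w) (hmn : m ∣ n) :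
    ¬ pathRel (Grel m) n w (.inr ()) := by
  intro h
  cases n with
  | zero =>
    obtain rfl : w = .inr () := h
    exact not_seesDeadEnd_inr hw
  | succ k =>
    obtain ⟨u, hwu, hu⟩ := pathRel_succ_right.1 h
    have hmk : m ∣ k := dvd_of_seesDeadEnd hw hwu (seesDeadEnd_iff.2 hu)
    have hm1 : m ∣ 1 := (Nat.dvd_add_right hmk).1 hmn
    exact absurd (Nat.le_of_dvd one_pos hm1) (by omega)

theorem eq_of_pathRel_of_dvd (hm : 2 ≤ m) (hw : SeesDeadEnd (Grel m) w) (hmn : m ∣ n)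
    (hwv : pathRel (Grel m) n w v) : v = w := by
  rcases v with j | _
  · rcases w with i | _
    · have hij : i + n ≡ j [MOD m] := pathRel_inl_inl_iff.1 hwv
      have hin : i + n ≡ i [MOD m] := Nat.add_modEq_left_iff.2 hmn
      exact congrArg Sum.inl (Fin.ext ((hij.symm.trans hin).eq_of_lt_of_lt j.isLt i.isLt))
    · exact absurd hw not_seesDeadEnd_inr
  · exact absurd hwv (not_pathRel_inr_of_dvd hm hw hmn)

end Grel

theorem stmt8_general (m : ℕ) (hm : 2 ≤ m) :
    (∀ w v₁ v₂ v₃ : Fin m ⊕ Unit, Grel m w v₁ → Grel m w v₂ → Grel m w v₃ →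
      v₁ = v₂ ∨ v₁ = v₃ ∨ v₂ = v₃) ∧
    (∀ w v₁ v₂ : Fin m ⊕ Unit, Grel m w v₁ → Grel m w v₂ → v₁ ≠ v₂ →
      SeesDeadEnd (Grel m) w) ∧
    (∀ (n k : ℕ) (v w u : Fin m ⊕ Unit), pathRel (Grel m) k v w → SeesDeadEnd (Grel m) w →
      pathRel (Grel m) n w u → SeesDeadEnd (Grel m) u → pathRel (Grel m) n v v) ∧
    (∀ (n : ℕ) (w u : Fin m ⊕ Unit), SeesDeadEnd (Grel m) w → pathRel (Grel m) n w u →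
      SeesDeadEnd (Grel m) u → ∀ v : Fin m ⊕ Unit, pathRel (Grel m) n w v → v = w) :=
  ⟨fun _ _ _ _ ↦ Grel.eq_or_eq_or_eq,
    fun _ _ _ ↦ Grel.seesDeadEnd_of_ne,
    fun _ _ _ _ _ hvw hw hwu hu ↦
      Grel.pathRel_self_of_dvd hw hvw (Grel.dvd_of_seesDeadEnd hw hwu hu),
    fun _ _ _ hw hwu hu _ ↦ Grel.eq_of_pathRel_of_dvd hm hw (Grel.dvd_of_seesDeadEnd hw hwu hu)⟩

theorem stmt8 (m : ℕ) (hm : 2 ≤ m) (hmeven : Even m) :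
    -- (a) every world has at most two `R`-successors
    (∀ w v₁ v₂ v₃ : Fin m ⊕ Unit, Grel m w v₁ → Grel m w v₂ → Grel m w v₃ →
      v₁ = v₂ ∨ v₁ = v₃ ∨ v₂ = v₃) ∧
    -- (b) every world having two distinct `R`-successors has a dead-end `R`-successor
    (∀ w v₁ v₂ : Fin m ⊕ Unit, Grel m w v₁ → Grel m w v₂ → v₁ ≠ v₂ →
      ∃ v, Grel m w v ∧ DeadEnd (Grel m) v) ∧
    -- (c) for all `n ≥ 1`, `k ≥ 1`: if `v R^k w` and `w` satisfies `B_n`, then `v R^n v`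
    (∀ n k : ℕ, 1 ≤ n → 1 ≤ k → ∀ v w : Fin m ⊕ Unit,
      pathRel (Grel m) k v w → CondB (Grel m) n w → pathRel (Grel m) n v v) ∧
    -- (d) for all `n ≥ 1`: if `w` satisfies `B_n` and `w R^n v`, then `v = w`
    (∀ n : ℕ, 1 ≤ n → ∀ w : Fin m ⊕ Unit, CondB (Grel m) n w →
      ∀ v : Fin m ⊕ Unit, pathRel (Grel m) n w v → v = w) := by
  obtain ⟨ha, hb, hc, hd⟩ := stmt8_general m hm
  exact ⟨ha, hb, fun _ _ _ _ _ _ hvw ⟨hw, ⟨_, hwu, hu⟩, _⟩ ↦ hc _ _ _ _ _ hvw hw hwu hu,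
    fun _ _ _ ⟨hw, ⟨_, hwu, hu⟩, _⟩ ↦ hd _ _ _ hw hwu hu⟩
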